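/- Let q be a prime power, n, ρ, μ, n_l positive integers with n = μ·n_l, and let S_1,…,S_μ be a partition of the column set [n] with each |S_b| = n_l, and T_1,…,T_μ a partition of the row set [n] with each |T_a| = n_l. Let R : [n]×[n] → [n] be a Latin square that is block-compatible: for all a, b ∈ [μ], all s ∈ [n], and all j, j' ∈ S_b, R(s,j) ∈ T_a if and only if R(s,j') ∈ T_a. Let 𝒞 ⊆ F_q^n be an F_q-linear code such that for every b ∈ [μ], every codeword of 𝒞 whose restriction to S_b is nonzero has at least ρ nonzero coordinates in S_b. Define 𝔹_R = { vd_R(T) : T ∈ 𝒞^n } with vd_R(T)_{R(s,j), j} = c^{(s)}_j. Then 𝔹_R satisfies the row part of (ρ) cover-locality: for every a ∈ [μ], every codeword of 𝔹_R whose restriction to the rows in T_a is a nonzero matrix has cover weight at least ρ on those rows. -/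

import Mathlib

/-- `X` is a cover of the matrix `E`: every nonzero entry lies in a row line
(`Sum.inl i`) or a column line (`Sum.inr j`) belonging to `X`. -/
def IsCover {F : Type*} [Zero F] {m n : ℕ} (E : Matrix (Fin m) (Fin n) F)
    (X : Finset (Fin m ⊕ Fin n)) : Prop :=
  ∀ i j, E i j ≠ 0 → Sum.inl i ∈ X ∨ Sum.inr j ∈ X

/-- The cover weight of a matrix: the minimum cardinality of a cover. -/
noncomputable def coverWeight {F : Type*} [Zero F] {m n : ℕ}
    (E : Matrix (Fin m) (Fin n) F) : ℕ :=
  sInf {k | ∃ X : Finset (Fin m ⊕ Fin n), IsCover E X ∧ X.card = k}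

/-- The Hamming weight of a vector: its number of nonzero coordinates. -/
noncomputable def hWt {K : Type*} [Zero K] {n : ℕ} (c : Fin n → K) : ℕ :=
  Nat.card {j : Fin n // c j ≠ 0}

/-- The minimum cover distance of a (linear) array code, as a set of matrices:
the minimum cover weight of a nonzero codeword. -/
noncomputable def minCoverDist {F : Type*} [Zero F] {n : ℕ}
    (S : Set (Matrix (Fin n) (Fin n) F)) : ℕ :=
  sInf {d | ∃ M ∈ S, M ≠ 0 ∧ coverWeight M = d}

/-- The minimum Hamming distance of a (linear) code, as a set of vectors:
the minimum Hamming weight of a nonzero codeword. -/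
noncomputable def minHammingDist {K : Type*} [Zero K] {n : ℕ}
    (S : Set (Fin n → K)) : ℕ :=
  sInf {d | ∃ c ∈ S, c ≠ 0 ∧ hWt c = d}

/-- Restriction of a matrix to a set of rows (other rows are zeroed out). -/
def rowRestrict {F : Type*} [Zero F] {n : ℕ} (Γ : Finset (Fin n))
    (M : Matrix (Fin n) (Fin n) F) : Matrix (Fin n) (Fin n) F :=
  Matrix.of fun i j => if i ∈ Γ then M i j else 0

/-- Restriction of a matrix to a set of columns (other columns are zeroed out). -/
def colRestrict {F : Type*} [Zero F] {n : ℕ} (Γ : Finset (Fin n))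
    (M : Matrix (Fin n) (Fin n) F) : Matrix (Fin n) (Fin n) F :=
  Matrix.of fun i j => if j ∈ Γ then M i j else 0

/-- `(r, ρ)` cover-locality: every row (resp. column) line has a recovery set of at
most `r + ρ - 1` rows (resp. columns) containing it, on which the restricted code
has minimum cover distance at least `ρ`. -/
def CoverLocality {F : Type*} [Field F] {n : ℕ}
    (B : Submodule F (Matrix (Fin n) (Fin n) F)) (r ρ : ℕ) : Prop :=
  (∀ i : Fin n, ∃ Γ : Finset (Fin n), i ∈ Γ ∧ Γ.card ≤ r + ρ - 1 ∧
    ∀ M ∈ B, rowRestrict Γ M ≠ 0 → ρ ≤ coverWeight (rowRestrict Γ M)) ∧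
  (∀ j : Fin n, ∃ Γ : Finset (Fin n), j ∈ Γ ∧ Γ.card ≤ r + ρ - 1 ∧
    ∀ M ∈ B, colRestrict Γ M ≠ 0 → ρ ≤ coverWeight (colRestrict Γ M))

/-! A nonzero entry of the restricted matrix is a nonzero entry of some codeword `T s` at a column
`j`. Block compatibility keeps the part of `T s` in the whole column block of `j` inside the chosen
rows, and since `R s` is injective, its at least `ρ` nonzero entries lie in pairwise distinct rows
and columns. No line contains two of them, so every cover has at least `ρ` lines. -/

section

variable {F : Type*} [Zero F] {m n : ℕ}

theorem isCover_univ (E : Matrix (Fin m) (Fin n) F) : IsCover E Finset.univ :=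
  fun _ _ _ => Or.inl (Finset.mem_univ _)

theorem exists_isCover_card_eq_coverWeight (E : Matrix (Fin m) (Fin n) F) :
    ∃ X : Finset (Fin m ⊕ Fin n), IsCover E X ∧ X.card = coverWeight E :=
  Nat.sInf_mem (s := {k | ∃ X, IsCover E X ∧ X.card = k}) ⟨_, _, isCover_univ E, rfl⟩

theorem IsCover.natCard_le_card {ι : Type*} {E : Matrix (Fin m) (Fin n) F}
    {X : Finset (Fin m ⊕ Fin n)} (hX : IsCover E X) {row : ι → Fin m} {col : ι → Fin n}
    (hrow : Function.Injective row) (hcol : Function.Injective col)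
    (hE : ∀ k, E (row k) (col k) ≠ 0) : Nat.card ι ≤ X.card := by
  have exists_line (k : ι) : ∃ x : X, x.1 = Sum.inl (row k) ∨ x.1 = Sum.inr (col k) := by
    rcases hX _ _ (hE k) with h | h
    exacts [⟨⟨_, h⟩, Or.inl rfl⟩, ⟨⟨_, h⟩, Or.inr rfl⟩]
  choose line hline using exists_line
  have line_injective : Function.Injective line := by
    intro k k' h
    rcases hline k with hk | hk <;> rcases hline k' with hk' | hk' <;> rw [h, hk'] at hk
    · exact (hrow (Sum.inl.inj hk)).symm
    · exact (Sum.inr_ne_inl hk).elim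
    · exact (Sum.inl_ne_inr hk).elim
    · exact (hcol (Sum.inr.inj hk)).symm
  simpa only [Nat.card_eq_finsetCard] using Nat.card_le_card_of_injective line line_injective

theorem natCard_le_coverWeight {ι : Type*} {E : Matrix (Fin m) (Fin n) F}
    {row : ι → Fin m} {col : ι → Fin n} (hrow : Function.Injective row)
    (hcol : Function.Injective col) (hE : ∀ k, E (row k) (col k) ≠ 0) :
    Nat.card ι ≤ coverWeight E := by
  obtain ⟨X, hX, hcard⟩ := exists_isCover_card_eq_coverWeight E
  exact hcard ▸ hX.natCard_le_card hrow hcol hE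

theorem rowRestrict_apply_ne_zero_iff {Γ : Finset (Fin n)} {M : Matrix (Fin n) (Fin n) F}
    {i j : Fin n} : rowRestrict Γ M i j ≠ 0 ↔ i ∈ Γ ∧ M i j ≠ 0 := by
  simp [rowRestrict]

theorem rowRestrict_ne_zero_iff {Γ : Finset (Fin n)} {M : Matrix (Fin n) (Fin n) F} :
    rowRestrict Γ M ≠ 0 ↔ ∃ i ∈ Γ, ∃ j, M i j ≠ 0 := by
  simp only [ne_eq, ← Matrix.ext_iff, Matrix.zero_apply, not_forall]
  simp only [← ne_eq, rowRestrict_apply_ne_zero_iff, exists_and_left]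

end

theorem vd_code_row_cover_locality_general {F σ β : Type*} [Zero F] {n ρ : ℕ}
    {S : β → Finset (Fin n)} (hS : ∀ j, ∃ b, j ∈ S b) {Γ : Finset (Fin n)}
    {R : σ → Fin n → Fin n} (hR_inj : ∀ s, Function.Injective (R s))
    (hR_surj : ∀ j, Function.Surjective fun s => R s j)
    (hcompat : ∀ b s, ∀ j ∈ S b, ∀ j' ∈ S b, R s j ∈ Γ → R s j' ∈ Γ)
    {C : Set (Fin n → F)}
    (hC : ∀ b, ∀ c ∈ C, (∃ j ∈ S b, c j ≠ 0) → ρ ≤ Nat.card {j // j ∈ S b ∧ c j ≠ 0})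
    {T : σ → Fin n → F} (hT : ∀ s, T s ∈ C) {M : Matrix (Fin n) (Fin n) F}
    (hM : ∀ s j, M (R s j) j = T s j) (hne : rowRestrict Γ M ≠ 0) :
    ρ ≤ coverWeight (rowRestrict Γ M) := by
  obtain ⟨i, hi, j, hij⟩ := rowRestrict_ne_zero_iff.mp hne
  obtain ⟨s, rfl⟩ := hR_surj j i
  obtain ⟨b, hj⟩ := hS j
  have entry_ne_zero (k : {k // k ∈ S b ∧ T s k ≠ 0}) : rowRestrict Γ M (R s k) k ≠ 0 :=
    rowRestrict_apply_ne_zero_iff.mpr ⟨hcompat b s j hj k k.2.1 hi, (hM s k).trans_ne k.2.2⟩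
  calc
    ρ ≤ Nat.card {k // k ∈ S b ∧ T s k ≠ 0} := hC b (T s) (hT s) ⟨j, hj, hM s j ▸ hij⟩
    _ ≤ coverWeight (rowRestrict Γ M) :=
      natCard_le_coverWeight ((hR_inj s).comp Subtype.val_injective) Subtype.val_injective
        entry_ne_zero

/-- with `n = μ·n_l`, column-partition `S` and row-partition `Trow`
into blocks of size `n_l`, and a block-compatible Latin square `R`, if every
codeword of `𝒞` that is nonzero on a column block `S b` has at least `ρ` nonzero
coordinates there, then the array code `𝔹_R = { vd_R(T) : T ∈ 𝒞^n }` satisfies the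
row part of `ρ` cover-locality: every codeword whose restriction to the rows
`Trow a` is nonzero has cover weight at least `ρ` on those rows. -/
theorem vd_code_row_cover_locality
    (q n ρ μ nl : ℕ) (hq : IsPrimePow q) (hn : 0 < n) (hρ : 0 < ρ)
    (hμ : 0 < μ) (hnl : 0 < nl) (hmul : n = μ * nl)
    (F : Type) [Field F] [Fintype F] (hcard : Fintype.card F = q)
    (S : Fin μ → Finset (Fin n)) (Trow : Fin μ → Finset (Fin n))
    (hScard : ∀ b, (S b).card = nl) (hTcard : ∀ a, (Trow a).card = nl)
    (hSpart : ∀ j : Fin n, ∃! b, j ∈ S b)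
    (hTpart : ∀ i : Fin n, ∃! a, i ∈ Trow a)
    (R : Fin n → Fin n → Fin n)
    (hR1 : ∀ s, Function.Injective (R s))
    (hR2 : ∀ j, Function.Injective (fun s => R s j))
    (hcompat : ∀ (a b : Fin μ) (s : Fin n), ∀ j ∈ S b, ∀ j' ∈ S b,
      (R s j ∈ Trow a ↔ R s j' ∈ Trow a))
    (C : Submodule F (Fin n → F))
    (hCloc : ∀ b : Fin μ, ∀ c ∈ C, (∃ j ∈ S b, c j ≠ 0) →
      ρ ≤ Nat.card {j : Fin n // j ∈ S b ∧ c j ≠ 0}) :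
    ∀ a : Fin μ, ∀ T : Fin n → (Fin n → F), (∀ s, T s ∈ C) →
      ∀ M : Matrix (Fin n) (Fin n) F, (∀ s j, M (R s j) j = T s j) →
        rowRestrict (Trow a) M ≠ 0 → ρ ≤ coverWeight (rowRestrict (Trow a) M) :=
  fun a _ hT _ hM => vd_code_row_cover_locality_general (fun j => (hSpart j).exists) hR1
    (fun j => Finite.surjective_of_injective (hR2 j))
    (fun b s j hj j' hj' => (hcompat a b s j hj j' hj').mp) hCloc hT hM
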